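/- Let N ∈ ℕ and let q, b, t ∈ ℂ satisfy (q;q)_N ≠ 0, (bq;q)_N ≠ 0 and (t;q)_{N+1} ≠ 0. Then (1−t) F_N(0,b;t) = (1−tq^N) Σ_{n=0}^{N} [N,n]_q (q;q)_n (bt)^n q^{n^2} / ((bq;q)_n (tq;q)_n). -/

import Mathlib

/-!
Write `A n` for the `n`-th term of `F_N(0,b;t)` and `B n` for that of `F_{N-1}(0,bq;tq)`. Since
`b q^(n+1) = 1 - (1 - b q^(n+1))`, a multiple of `B n` splits as
`(1 - q^N) b t q / (1 - bq) * B n = (1 - t q^(N-1-n)) A (n+1) - t (1 - q^(N-n)) A n`.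
Summing over `n` and using `(1 - t q^(N-n)) - t (1 - q^(N-n)) = 1 - t` gives the recurrence
`(1 - t) F_N(0,b;t) = (1 - t q^N) + (1 - q^N) b t q / (1 - bq) * F_{N-1}(0,bq;tq)`
(`fineF_zero_succ`). The right-hand side of the theorem satisfies the same recurrence, as one sees
by splitting off the term `n = 0` of its sum (`rhsSum_succ`), and the theorem follows by induction
on `N`, with `b` and `t` replaced by `bq` and `tq`.
-/

open Finset

/-- The q-Pochhammer symbol (z; q)_n = prod_{j=0}^{n-1} (1 - z q^j). -/
noncomputable def qPoch (q z : ℂ) (n : ℕ) : ℂ :=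
  ∏ j ∈ Finset.range n, (1 - z * q ^ j)

/-- The Gaussian binomial coefficient [N, n]_q = (q;q)_N / ((q;q)_n (q;q)_{N-n}). -/
noncomputable def qBinom (q : ℂ) (N n : ℕ) : ℂ :=
  qPoch q q N / (qPoch q q n * qPoch q q (N - n))

/-- The finite analogue of Fine's function,
F_N(a, b; t) = sum_{n=0}^{N} [N,n]_q (aq;q)_n (t;q)_{N-n} (q;q)_n t^n / ((bq;q)_n (t;q)_N). -/
noncomputable def fineF (q a b t : ℂ) (N : ℕ) : ℂ :=
  ∑ n ∈ Finset.range (N + 1),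
    qBinom q N n * (qPoch q (a * q) n * qPoch q t (N - n) * qPoch q q n * t ^ n) /
      (qPoch q (b * q) n * qPoch q t N)

lemma qPoch_zero (q z : ℂ) : qPoch q z 0 = 1 := by simp [qPoch]

lemma qPoch_zero_left (q : ℂ) (n : ℕ) : qPoch q 0 n = 1 := by simp [qPoch]

lemma qPoch_succ (q z : ℂ) (n : ℕ) :
    qPoch q z (n + 1) = qPoch q z n * (1 - z * q ^ n) := by
  simp [qPoch, Finset.prod_range_succ]

lemma qPoch_succ' (q z : ℂ) (n : ℕ) :
    qPoch q z (n + 1) = (1 - z) * qPoch q (z * q) n := by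
  simp only [qPoch, Finset.prod_range_succ', pow_zero, mul_one]
  rw [mul_comm]
  congr 1
  refine Finset.prod_congr rfl fun j _ => ?_
  ring

lemma qPoch_ne_zero_of_le {q z : ℂ} {m n : ℕ} (hmn : m ≤ n) (h : qPoch q z n ≠ 0) :
    qPoch q z m ≠ 0 := by
  simp only [qPoch, Finset.prod_ne_zero_iff, Finset.mem_range] at h ⊢
  exact fun j hj => h j (by omega)

/-- The `n`-th term of `F_N(0, b; t)`. -/
noncomputable def fineTerm (q b t : ℂ) (N n : ℕ) : ℂ :=
  qBinom q N n * (qPoch q (0 * q) n * qPoch q t (N - n) * qPoch q q n * t ^ n) /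
    (qPoch q (b * q) n * qPoch q t N)

/-- The `n`-th term of the sum on the right-hand side of the transformation. -/
noncomputable def rhsTerm (q b t : ℂ) (N n : ℕ) : ℂ :=
  qBinom q N n * (qPoch q q n * (b * t) ^ n * q ^ (n ^ 2)) /
    (qPoch q (b * q) n * qPoch q (t * q) n)

/-- The splitting of the terms of `F_{N-1}(0, bq; tq)`, with `N = n + k + 1`. -/
lemma fineTerm_split (q b t : ℂ) (n k : ℕ)
    (hq : qPoch q q (n + k + 1) ≠ 0) (hb : qPoch q (b * q) (n + k + 1) ≠ 0)
    (ht : qPoch q t (n + k + 1) ≠ 0) :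
    (1 - q ^ (n + k + 1)) * (b * t * q) / (1 - b * q) * fineTerm q (b * q) (t * q) (n + k) n =
      (1 - t * q ^ k) * fineTerm q b t (n + k + 1) (n + 1) -
        t * (1 - q ^ (k + 1)) * fineTerm q b t (n + k + 1) n := by
  have hqn : qPoch q q n ≠ 0 := qPoch_ne_zero_of_le (by omega) hq
  have hqn1 : qPoch q q (n + 1) ≠ 0 := qPoch_ne_zero_of_le (by omega) hq
  have hqk1 : qPoch q q (k + 1) ≠ 0 := qPoch_ne_zero_of_le (by omega) hq
  have hbn1 : qPoch q (b * q) (n + 1) ≠ 0 := qPoch_ne_zero_of_le (by omega) hb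
  have htk1 : qPoch q t (k + 1) ≠ 0 := qPoch_ne_zero_of_le (by omega) ht
  have hb' := hbn1
  have ht' := ht
  rw [qPoch_succ'] at hb' ht'
  obtain ⟨hb0, hbq⟩ := mul_ne_zero_iff.1 hb'
  obtain ⟨ht0, htq⟩ := mul_ne_zero_iff.1 ht'
  have eb : qPoch q (b * q * q) n = qPoch q (b * q) n * (1 - b * q * q ^ n) / (1 - b * q) := by
    rw [eq_div_iff hb0, ← qPoch_succ, qPoch_succ', mul_comm]
  have et : qPoch q (t * q) k = qPoch q t k * (1 - t * q ^ k) / (1 - t) := by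
    rw [eq_div_iff ht0, ← qPoch_succ, qPoch_succ', mul_comm]
  have hqk := qPoch_succ q q k
  rw [hqk] at hqk1
  obtain ⟨hk, hk'⟩ := mul_ne_zero_iff.1 hqk1
  have hbn := qPoch_succ q (b * q) n
  rw [hbn] at hbn1
  obtain ⟨hbn0, hbn'⟩ := mul_ne_zero_iff.1 hbn1
  simp only [fineTerm, qBinom, zero_mul, qPoch_zero_left,
    show n + k + 1 - (n + 1) = k by omega, show n + k - n = k by omega,
    show n + k + 1 - n = k + 1 by omega]
  rw [eb, et, qPoch_succ' q t (n + k), qPoch_succ q q (n + k), hqk, hbn, qPoch_succ q t k]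
  generalize qPoch q q (n + 1) = x1 at *
  generalize qPoch q q n = x2 at *
  generalize qPoch q q k = x3 at *
  generalize qPoch q (b * q) n = x4 at *
  generalize qPoch q (t * q) (n + k) = x5 at *
  generalize qPoch q t k = x6 at *
  have e1 : q ^ (k + 1) = q * q ^ k := by ring
  have e2 : q ^ (n + k + 1) = q * q ^ (n + k) := by ring
  rw [e1, e2, mul_pow, pow_succ t n]
  generalize q ^ (n + k) = y1 at *
  generalize q ^ k = y2 at *
  generalize q ^ n = y3 at *
  -- Naming the denominators lets `field_simp` treat them as atoms.
  generalize hw : 1 - b * q * y3 = w at *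
  generalize hv : 1 - b * q = v at *
  generalize hu : 1 - q * y2 = u at *
  field_simp
  rw [← hw]
  ring

lemma fineF_zero_succ (N : ℕ) (q b t : ℂ)
    (hq : qPoch q q (N + 1) ≠ 0) (hb : qPoch q (b * q) (N + 1) ≠ 0)
    (ht : qPoch q t (N + 1) ≠ 0) :
    (1 - t) * fineF q 0 b t (N + 1) = (1 - t * q ^ (N + 1)) +
      (1 - q ^ (N + 1)) * (b * t * q) / (1 - b * q) * fineF q 0 (b * q) (t * q) N := by
  change (1 - t) * ∑ n ∈ range (N + 1 + 1), fineTerm q b t (N + 1) n = _ + _ *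
    ∑ n ∈ range (N + 1), fineTerm q (b * q) (t * q) N n
  have hsplit : ∀ n ∈ range (N + 1),
      (1 - q ^ (N + 1)) * (b * t * q) / (1 - b * q) * fineTerm q (b * q) (t * q) N n =
      (1 - t * q ^ (N + 1 - (n + 1))) * fineTerm q b t (N + 1) (n + 1) -
        t * (1 - q ^ (N + 1 - n)) * fineTerm q b t (N + 1) n := by
    intro n hn
    obtain ⟨k, rfl⟩ := Nat.exists_eq_add_of_le (Nat.lt_succ_iff.1 (mem_range.1 hn))
    rw [fineTerm_split q b t n k hq hb ht, show n + k + 1 - (n + 1) = k by omega,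
      show n + k + 1 - n = k + 1 by omega]
  have hzero : fineTerm q b t (N + 1) 0 = 1 := by
    simp [fineTerm, qBinom, qPoch_zero, hq, ht]
  have hf := sum_range_succ' (fun n => (1 - t * q ^ (N + 1 - n)) * fineTerm q b t (N + 1) n) (N + 1)
  have hg := sum_range_succ (fun n => t * (1 - q ^ (N + 1 - n)) * fineTerm q b t (N + 1) n) (N + 1)
  have hfg : (1 - t) * ∑ n ∈ range (N + 1 + 1), fineTerm q b t (N + 1) n =
      ∑ n ∈ range (N + 1 + 1), (1 - t * q ^ (N + 1 - n)) * fineTerm q b t (N + 1) n -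
      ∑ n ∈ range (N + 1 + 1), t * (1 - q ^ (N + 1 - n)) * fineTerm q b t (N + 1) n := by
    rw [mul_sum, ← sum_sub_distrib]
    exact sum_congr rfl fun n _ => by ring
  rw [hfg, mul_sum, sum_congr rfl hsplit, sum_sub_distrib, hf, hg, hzero]
  simp only [Nat.sub_self, Nat.sub_zero, pow_zero]
  ring

lemma rhsSum_succ (N : ℕ) (q b t : ℂ) (hq : qPoch q q (N + 1) ≠ 0) :
    ∑ n ∈ range (N + 1 + 1), rhsTerm q b t (N + 1) n = 1 +
      (1 - q ^ (N + 1)) * (b * t * q) / ((1 - b * q) * (1 - t * q)) *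
        ∑ n ∈ range (N + 1), rhsTerm q (b * q) (t * q) N n := by
  have hzero : rhsTerm q b t (N + 1) 0 = 1 := by
    simp [rhsTerm, qBinom, qPoch_zero, hq]
  rw [sum_range_succ', hzero, add_comm, mul_sum]
  congr 1
  refine sum_congr rfl fun n hn => ?_
  have hn' : n < N + 1 := mem_range.1 hn
  have hqn : qPoch q q n ≠ 0 := qPoch_ne_zero_of_le (by omega) hq
  have hqn1 : qPoch q q (n + 1) ≠ 0 := qPoch_ne_zero_of_le (by omega) hq
  have e : q ^ ((n + 1) ^ 2) = q ^ (n ^ 2) * q ^ n * q ^ n * q := by ring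
  have e2 : q ^ (N + 1) = q * q ^ N := by ring
  simp only [rhsTerm, qBinom, show N + 1 - (n + 1) = N - n by omega]
  rw [qPoch_succ' q (b * q), qPoch_succ' q (t * q), qPoch_succ q q N, e, e2]
  have c1 : ∀ x y : ℂ, x / (qPoch q q (n + 1) * y) * (qPoch q q (n + 1)) = x / y := by
    intro x y; rw [div_mul_eq_mul_div, mul_comm x, mul_div_mul_left _ _ hqn1]
  have c2 : ∀ x y : ℂ, x / (qPoch q q n * y) * (qPoch q q n) = x / y := by
    intro x y; rw [div_mul_eq_mul_div, mul_comm x, mul_div_mul_left _ _ hqn]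
  simp only [← mul_assoc, c1, c2]
  simp only [div_eq_mul_inv, mul_inv, mul_pow]
  ring

theorem fineF_zero_b_t (N : ℕ) (q b t : ℂ)
    (hq : qPoch q q N ≠ 0) (hb : qPoch q (b * q) N ≠ 0)
    (ht : qPoch q t (N + 1) ≠ 0) :
    (1 - t) * fineF q 0 b t N =
      (1 - t * q ^ N) *
        ∑ n ∈ Finset.range (N + 1),
          qBinom q N n * (qPoch q q n * (b * t) ^ n * q ^ (n ^ 2)) /
            (qPoch q (b * q) n * qPoch q (t * q) n) := by
  change _ = _ * ∑ n ∈ range (N + 1), rhsTerm q b t N n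
  induction N generalizing b t with
  | zero => simp [fineF, rhsTerm, qBinom, qPoch_zero]
  | succ N ih =>
    have hb' := hb
    have ht' := ht
    rw [qPoch_succ'] at hb' ht'
    obtain ⟨hb0, hbq⟩ := mul_ne_zero_iff.1 hb'
    obtain ⟨ht0, htq⟩ := mul_ne_zero_iff.1 ht'
    have htq1 : 1 - t * q ≠ 0 := by
      rw [qPoch_succ'] at htq
      exact (mul_ne_zero_iff.1 htq).1
    have h := ih (b * q) (t * q) (qPoch_ne_zero_of_le (Nat.le_succ N) hq) hbq htq
    have h' : fineF q 0 (b * q) (t * q) N = (1 - t * q ^ (N + 1)) / (1 - t * q) *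
        ∑ n ∈ range (N + 1), rhsTerm q (b * q) (t * q) N n := by
      rw [div_mul_eq_mul_div, eq_div_iff htq1, mul_comm, h]
      ring
    rw [fineF_zero_succ N q b t hq hb (qPoch_ne_zero_of_le (Nat.le_succ _) ht),
      rhsSum_succ N q b t hq, h']
    field_simp
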